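/- arXiv:2107.02325 — 2 statements merged into one kernel-verified Lean document; each statement's English description precedes it below -/
import Mathlib

section
/- Let f be a ternary cubic form over ℂ and let D = det(∂ᵢ∂ⱼ f) be its Hessian determinant. Then f is completely reducible if and only if for every vector (u₁,u₂,u₃) ∈ ℂ³ the determinant of the 3×3 matrix with rows (∂₁D, ∂₂D, ∂₃D), (∂₁f, ∂₂f, ∂₃f), (u₁, u₂, u₃) is the zero polynomial (i.e. the Jacobian of D, f and every linear form vanishes identically). -/
open MvPolynomial

/-- The Hessian determinant `det (∂ᵢ∂ⱼ f)` of a ternary form. -/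
noncomputable def hessianDet (f : MvPolynomial (Fin 3) ℂ) : MvPolynomial (Fin 3) ℂ :=
  Matrix.det (Matrix.of fun i j : Fin 3 => pderiv i (pderiv j f))

/-- A linear form is a homogeneous polynomial of degree 1. -/
def IsLinearForm (a : MvPolynomial (Fin 3) ℂ) : Prop := a.IsHomogeneous 1

/-- A cubic form is completely reducible if it is a product of three linear forms. -/
def CompletelyReducible (f : MvPolynomial (Fin 3) ℂ) : Prop :=
  ∃ a b c : MvPolynomial (Fin 3) ℂ,
    IsLinearForm a ∧ IsLinearForm b ∧ IsLinearForm c ∧ f = a * b * c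

/-!
The Hessian determinant of `xyz` is `2xyz`, and Hessian determinants transform by `det²` under
linear substitutions, so a product of three linear forms has gradient parallel to that of `D`.

Conversely, suppose `∇D ∥ ∇f`. If the curve `f = 0` has a smooth point `p`, choose coordinates with
`p = e₀` and tangent line `x₁ = 0`. Comparing gradients at `p` shows that the tangent line is a
component, `f = x₁ Q`, and comparing them at one further point shows that the conic `Q` is
degenerate. If every zero of `f` is singular, choose coordinates with a zero at `e₀`; then `f` is
free of `x₀`, hence a binary form, and splits.
-/

section LinearSubst

open Matrix

variable {R σ τ υ : Type*} [CommRing R] [Fintype τ]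

/-- The linear change of variables `f(x) ↦ f(M x)`, encoded as the substitution
`Xᵢ ↦ ∑ⱼ Mᵢⱼ Xⱼ`. -/
noncomputable def linearSubst (M : Matrix σ τ R) : MvPolynomial σ R →ₐ[R] MvPolynomial τ R :=
  bind₁ M.toMvPolynomial

lemma linearSubst_X (M : Matrix σ τ R) (i : σ) :
    linearSubst M (X i) = ∑ j, C (M i j) * X j := by
  simp only [linearSubst, bind₁_X_right, Matrix.toMvPolynomial, C_mul_X_eq_monomial]

lemma linearSubst_one [DecidableEq τ] (f : MvPolynomial τ R) : linearSubst 1 f = f := by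
  rw [linearSubst, Matrix.toMvPolynomial_one, bind₁, aeval_X_left_apply]

lemma linearSubst_linearSubst [Fintype υ] (M : Matrix σ τ R) (N : Matrix τ υ R)
    (f : MvPolynomial σ R) : linearSubst N (linearSubst M f) = linearSubst (M * N) f := by
  simp only [linearSubst, bind₁_bind₁, ← Matrix.toMvPolynomial_mul]

lemma isHomogeneous_linearSubst (M : Matrix σ τ R) {f : MvPolynomial σ R} {n : ℕ}
    (hf : f.IsHomogeneous n) : (linearSubst M f).IsHomogeneous n := by
  rw [← one_mul n]
  exact hf.aeval M.toMvPolynomial M.toMvPolynomial_isHomogeneous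

lemma eval_linearSubst (M : Matrix σ τ R) (f : MvPolynomial σ R) (v : τ → R) :
    eval v (linearSubst M f) = eval (M *ᵥ v) f := by
  have h := aeval_bind₁ v M.toMvPolynomial f
  simp only [aeval_eq_eval, M.toMvPolynomial_eval_eq_apply] at h
  exact h

lemma pderiv_linearSubst [Fintype σ] (M : Matrix σ τ R) (f : MvPolynomial σ R) (j : τ) :
    pderiv j (linearSubst M f) = ∑ i, C (M i j) * linearSubst M (pderiv i f) := by
  classical
  induction f using MvPolynomial.induction_on with
  | C a => simp
  | add p q hp hq => simp only [map_add, hp, hq, mul_add, Finset.sum_add_distrib]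
  | mul_X p k hp =>
    have hX : pderiv j (linearSubst M (X k)) = C (M k j) := by
      simp [linearSubst_X, pderiv_X, Pi.single_apply]
    have hX' (i : σ) : linearSubst M (pderiv i (X k)) = if k = i then 1 else 0 := by
      rw [pderiv_X, Pi.single_apply, apply_ite (linearSubst M), map_one, map_zero]
    simp only [map_mul, pderiv_mul, hp, hX, map_add, mul_add, Finset.sum_add_distrib, hX',
      mul_ite, mul_one, mul_zero, Finset.sum_ite_eq, Finset.mem_univ, if_true, Finset.sum_mul,
      mul_assoc, mul_comm (C _) (linearSubst M p)]

/-- The gradient of `f` at the point `v`. -/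
noncomputable def gradientAt (f : MvPolynomial σ R) (v : σ → R) : σ → R :=
  fun i => eval v (pderiv i f)

lemma gradientAt_linearSubst [Fintype σ] (M : Matrix σ τ R) (f : MvPolynomial σ R) (v : τ → R) :
    gradientAt (linearSubst M f) v = gradientAt f (M *ᵥ v) ᵥ* M := by
  ext j
  simp only [gradientAt, pderiv_linearSubst, map_sum, map_mul, eval_C, eval_linearSubst, vecMul,
    dotProduct, mul_comm]

/-- The matrix of second partial derivatives of a polynomial, the general form of the matrix in
`hessianDet`. -/
noncomputable def hessianMatrix (f : MvPolynomial σ R) : Matrix σ σ (MvPolynomial σ R) :=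
  of fun i j => pderiv i (pderiv j f)

lemma hessianMatrix_linearSubst [Fintype σ] (M : Matrix σ τ R) (f : MvPolynomial σ R) :
    hessianMatrix (linearSubst M f) =
      (M.map (C (σ := τ)))ᵀ * (hessianMatrix f).map (linearSubst M) * M.map (C (σ := τ)) := by
  refine Matrix.ext fun i j => ?_
  simp only [hessianMatrix, of_apply, pderiv_linearSubst, map_sum, pderiv_C_mul, mul_apply,
    transpose_apply, Matrix.map_apply, Finset.mul_sum, Finset.sum_mul]
  exact Finset.sum_congr rfl fun k _ => Finset.sum_congr rfl fun l _ => by ring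

lemma det_hessianMatrix_linearSubst [DecidableEq τ] (M : Matrix τ τ R) (f : MvPolynomial τ R) :
    (hessianMatrix (linearSubst M f)).det =
      C (M.det ^ 2) * linearSubst M (hessianMatrix f).det := by
  have hM : (M.map C).det = (C M.det : MvPolynomial τ R) := (RingHom.map_det C M).symm
  have hf : ((hessianMatrix f).map (linearSubst M)).det = linearSubst M (hessianMatrix f).det :=
    (AlgHom.map_det (linearSubst M) _).symm
  rw [hessianMatrix_linearSubst, det_mul, det_mul, det_transpose, hM, hf, C_pow]
  ring

end LinearSubst

section ParallelGradients

variable {R σ τ : Type*} [CommRing R]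

/-- Proportionality of the gradients of `g` and `f`: all `2 × 2` minors of the Jacobian matrix of
`(g, f)` vanish. Stated by minors, it makes sense over any ring and when a gradient is zero. -/
def ParallelGradients (g f : MvPolynomial σ R) : Prop :=
  ∀ i j, pderiv i g * pderiv j f = pderiv j g * pderiv i f

namespace ParallelGradients

lemma C_mul_self (c : R) (f : MvPolynomial σ R) : ParallelGradients (C c * f) f := fun i j => by
  rw [pderiv_C_mul, pderiv_C_mul]
  ring

variable {g f : MvPolynomial σ R}

lemma C_mul (h : ParallelGradients g f) (c : R) : ParallelGradients (C c * g) f := fun i j => by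
  rw [pderiv_C_mul, pderiv_C_mul, mul_assoc, mul_assoc, h i j]

lemma map_linearSubst [Finite σ] [Fintype τ] (h : ParallelGradients g f) (M : Matrix σ τ R) :
    ParallelGradients (linearSubst M g) (linearSubst M f) := fun i j => by
  cases nonempty_fintype σ
  have hM (k l : σ) := congrArg (linearSubst M) (h k l)
  simp only [map_mul] at hM
  simp only [pderiv_linearSubst, Finset.sum_mul_sum]
  rw [Finset.sum_comm]
  refine Finset.sum_congr rfl fun k _ => Finset.sum_congr rfl fun l _ => ?_
  linear_combination C (M l i) * C (M k j) * hM l k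

lemma det_hessianMatrix_linearSubst [Fintype σ] [DecidableEq σ]
    (h : ParallelGradients (hessianMatrix f).det f) (M : Matrix σ σ R) :
    ParallelGradients (hessianMatrix (linearSubst M f)).det (linearSubst M f) := by
  rw [_root_.det_hessianMatrix_linearSubst]
  exact (h.map_linearSubst M).C_mul _

lemma gradientAt_eq_zero [IsDomain R] (h : ParallelGradients g f) {v : σ → R} {i j : σ}
    (hi : gradientAt f v i = 0) (hj : gradientAt f v j ≠ 0) : gradientAt g v i = 0 := by
  have hv : gradientAt g v i * gradientAt f v j = gradientAt g v j * gradientAt f v i := by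
    simpa only [gradientAt, map_mul] using congrArg (eval v) (h i j)
  rw [hi, mul_zero] at hv
  exact (mul_eq_zero.1 hv).resolve_right hj

end ParallelGradients

lemma parallelGradients_iff_det_eq_zero {g f : MvPolynomial (Fin 3) R} :
    ParallelGradients g f ↔
      ∀ u : Fin 3 → R,
        Matrix.det
          !![pderiv 0 g, pderiv 1 g, pderiv 2 g;
             pderiv 0 f, pderiv 1 f, pderiv 2 f;
             C (u 0), C (u 1), C (u 2)] = 0 := by
  simp only [Matrix.det_fin_three, Matrix.of_apply, Matrix.cons_val]
  constructor
  · intro h u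
    linear_combination C (u 2) * h 0 1 - C (u 1) * h 0 2 + C (u 0) * h 1 2
  · intro h
    have h0 := h ![1, 0, 0]
    have h1 := h ![0, 1, 0]
    have h2 := h ![0, 0, 1]
    simp only [Matrix.cons_val, C_0, C_1] at h0 h1 h2
    intro i j
    fin_cases i <;> fin_cases j <;> grind

end ParallelGradients

section Homogeneous

lemma exists_eq_sum_C_mul_X {R σ : Type*} [CommRing R] [Fintype σ] {f : MvPolynomial σ R}
    (hf : f.IsHomogeneous 1) : ∃ v : σ → R, f = ∑ i, C (v i) * X i := by
  rw [← mem_homogeneousSubmodule, homogeneousSubmodule_one_eq_span_X,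
    Submodule.mem_span_range_iff_exists_fun] at hf
  obtain ⟨v, rfl⟩ := hf
  exact ⟨v, by simp only [smul_eq_C_mul]⟩

-- Euler's identity, divided by the degree.
lemma exists_eq_sum_X_mul {K σ : Type*} [Field K] [CharZero K] [Fintype σ]
    {f : MvPolynomial σ K} {n : ℕ} (hf : f.IsHomogeneous (n + 1)) :
    ∃ g : σ → MvPolynomial σ K, (∀ i, (g i).IsHomogeneous n) ∧ f = ∑ i, X i * g i := by
  refine ⟨fun i => C ((n + 1 : K)⁻¹) * pderiv i f, fun i => ?_, ?_⟩
  · simpa using (isHomogeneous_C σ ((n + 1 : K)⁻¹)).mul (hf.pderiv (i := i))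
  · have hn : (n + 1 : K) ≠ 0 := n.cast_add_one_ne_zero
    have hE := hf.sum_X_mul_pderiv
    simp only [mul_left_comm (X _) (C _), ← Finset.mul_sum]
    rw [hE, nsmul_eq_mul, ← mul_assoc, ← map_natCast C, ← C_mul, Nat.cast_add_one,
      inv_mul_cancel₀ hn, C_1, one_mul]

lemma dotProduct_gradientAt {R σ : Type*} [CommRing R] [Fintype σ] {f : MvPolynomial σ R} {n : ℕ}
    (hf : f.IsHomogeneous n) (v : σ → R) : v ⬝ᵥ gradientAt f v = n * eval v f := by
  simpa [dotProduct, gradientAt] using congrArg (eval v) hf.sum_X_mul_pderiv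

lemma gradientAt_zero {R σ : Type*} [CommRing R] {f : MvPolynomial σ R} {n : ℕ}
    (hf : f.IsHomogeneous (n + 2)) : gradientAt f 0 = 0 := by
  ext i
  rw [gradientAt, MvPolynomial.eval_zero, constantCoeff_eq]
  exact (hf.pderiv (i := i)).coeff_eq_zero (by simp)

end Homogeneous

section ProdLinearForms

variable {R σ τ : Type*} [CommRing R] {m n : ℕ}

/-- `f` is a product of `n` linear forms. For `n = 3` this is `CompletelyReducible`, over any ring
and in any set of variables. -/
def IsProdLinearForms (n : ℕ) (f : MvPolynomial σ R) : Prop :=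
  ∃ l : Fin n → MvPolynomial σ R, (∀ i, (l i).IsHomogeneous 1) ∧ f = ∏ i, l i

namespace IsProdLinearForms

variable {f g : MvPolynomial σ R}

lemma of_isHomogeneous_one (hf : f.IsHomogeneous 1) : IsProdLinearForms 1 f :=
  ⟨fun _ => f, fun _ => hf, by rw [Fin.prod_univ_one]⟩

lemma mul (hf : IsProdLinearForms m f) (hg : IsProdLinearForms n g) :
    IsProdLinearForms (m + n) (f * g) := by
  obtain ⟨k, hk, rfl⟩ := hf
  obtain ⟨l, hl, rfl⟩ := hg
  exact ⟨Fin.append k l, Fin.addCases (by simpa using hk) (by simpa using hl),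
    by simp [Fin.prod_univ_add]⟩

lemma map_rename (hf : IsProdLinearForms n f) (e : σ → τ) :
    IsProdLinearForms n (rename e f) := by
  obtain ⟨l, hl, rfl⟩ := hf
  exact ⟨fun i => rename e (l i), fun i => (hl i).rename_isHomogeneous, map_prod _ _ _⟩

lemma map_linearSubst [Fintype τ] (hf : IsProdLinearForms n f) (M : Matrix σ τ R) :
    IsProdLinearForms n (linearSubst M f) := by
  obtain ⟨l, hl, rfl⟩ := hf
  exact ⟨fun i => linearSubst M (l i), fun i => isHomogeneous_linearSubst M (hl i),
    map_prod _ _ _⟩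

lemma of_linearSubst [Fintype σ] [DecidableEq σ] {M : Matrix σ σ R} (hM : IsUnit M.det)
    (h : IsProdLinearForms n (linearSubst M f)) : IsProdLinearForms n f := by
  have hinv := h.map_linearSubst M⁻¹
  rwa [linearSubst_linearSubst, M.mul_nonsing_inv hM, linearSubst_one] at hinv

lemma exists_eq_linearSubst_prod_X [Fintype σ] (hf : IsProdLinearForms n f) :
    ∃ M : Matrix (Fin n) σ R, f = linearSubst M (∏ i, X i) := by
  obtain ⟨l, hl, rfl⟩ := hf
  choose M hM using fun i => exists_eq_sum_C_mul_X (hl i)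
  exact ⟨Matrix.of M, by simp only [map_prod, linearSubst_X, Matrix.of_apply, ← hM]⟩

end IsProdLinearForms

lemma completelyReducible_iff_isProdLinearForms {f : MvPolynomial (Fin 3) ℂ} :
    CompletelyReducible f ↔ IsProdLinearForms 3 f := by
  constructor
  · rintro ⟨a, b, c, ha, hb, hc, rfl⟩
    exact ((IsProdLinearForms.of_isHomogeneous_one ha).mul (.of_isHomogeneous_one hb)).mul
      (.of_isHomogeneous_one hc)
  · rintro ⟨l, hl, rfl⟩
    exact ⟨l 0, l 1, l 2, hl 0, hl 1, hl 2, Fin.prod_univ_three l⟩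

lemma det_hessianMatrix_prod_X :
    (hessianMatrix (∏ i, X i : MvPolynomial (Fin 3) R)).det = C 2 * ∏ i, X i := by
  simp only [hessianMatrix, Matrix.det_fin_three, Matrix.of_apply, Fin.prod_univ_three, map_add,
    map_zero, Derivation.leibniz, Derivation.map_one_eq_zero, pderiv_X, Pi.single_apply,
    Fin.reduceEq, ↓reduceIte, smul_eq_mul, map_ofNat C 2]
  ring

theorem IsProdLinearForms.parallelGradients_det_hessianMatrix {f : MvPolynomial (Fin 3) R}
    (hf : IsProdLinearForms 3 f) : ParallelGradients (hessianMatrix f).det f := by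
  obtain ⟨M, rfl⟩ := hf.exists_eq_linearSubst_prod_X
  refine ParallelGradients.det_hessianMatrix_linearSubst ?_ M
  rw [det_hessianMatrix_prod_X]
  exact .C_mul_self 2 _

end ProdLinearForms

section BinaryForm

variable {K : Type*} [Field K] [IsAlgClosed K] {n : ℕ}

lemma exists_linear_mul_eq {p : Polynomial K} (hp : p.natDegree ≤ n + 1) :
    ∃ l q : Polynomial K, l.natDegree ≤ 1 ∧ q.natDegree ≤ n ∧ p = l * q := by
  rcases hp.lt_or_eq with hlt | heq
  · exact ⟨1, p, by simp, Nat.lt_succ_iff.mp hlt, (one_mul p).symm⟩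
  · have hdeg : p.degree ≠ 0 :=
      (Polynomial.natDegree_pos_iff_degree_pos.1 (heq ▸ n.succ_pos)).ne'
    obtain ⟨t, ht⟩ := IsAlgClosed.exists_root p hdeg
    refine ⟨Polynomial.X - Polynomial.C t, p /ₘ (Polynomial.X - Polynomial.C t),
      Polynomial.natDegree_X_sub_C_le t, ?_,
      (Polynomial.mul_divByMonic_eq_iff_isRoot.2 ht).symm⟩
    rw [Polynomial.natDegree_divByMonic _ (Polynomial.monic_X_sub_C t),
      Polynomial.natDegree_X_sub_C, heq, Nat.add_sub_cancel]

lemma isProdLinearForms_homogenize {p : Polynomial K} (hp : p.natDegree ≤ n + 1) :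
    IsProdLinearForms (n + 1) (p.homogenize (n + 1)) := by
  induction n generalizing p with
  | zero => exact .of_isHomogeneous_one (Polynomial.isHomogeneous_homogenize p)
  | succ n ih =>
    obtain ⟨l, q, hl, hq, rfl⟩ := exists_linear_mul_eq hp
    rw [mul_comm l q, Polynomial.homogenize_mul q l hq hl]
    exact (ih hq).mul (.of_isHomogeneous_one (Polynomial.isHomogeneous_homogenize l))

variable {f : MvPolynomial (Fin 2) K}

lemma isProdLinearForms_of_isHomogeneous (hf : f.IsHomogeneous (n + 1)) :
    IsProdLinearForms (n + 1) f := by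
  rw [← Polynomial.homogenize_eq_of_isHomogeneous hf rfl]
  have hvar (i : Fin 2) : (![Polynomial.X, 1] i : Polynomial K).natDegree ≤ 1 := by
    fin_cases i <;> simp
  refine isProdLinearForms_homogenize ?_
  simpa using aeval_natDegree_le f hf.totalDegree_le _ hvar

lemma exists_ne_zero_eval_eq_zero (hf : f.IsHomogeneous (n + 1)) : ∃ v ≠ 0, eval v f = 0 := by
  obtain ⟨l, hl, rfl⟩ := isProdLinearForms_of_isHomogeneous hf
  obtain ⟨a, ha⟩ := exists_eq_sum_C_mul_X (hl 0)
  obtain ⟨v, hv, hva⟩ := exists_ne_zero_dotProduct_eq_zero a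
  refine ⟨v, hv, ?_⟩
  rw [map_prod, Finset.prod_eq_zero (Finset.mem_univ 0)]
  simpa [ha, dotProduct, mul_comm] using hva

end BinaryForm

section Frame

open Matrix

variable {K : Type*} [Field K]

lemma exists_dotProduct_eq_one {ι : Type*} [Fintype ι] {v : ι → K} (hv : v ≠ 0) :
    ∃ w, v ⬝ᵥ w = 1 := by
  classical
  obtain ⟨i, hi⟩ := Function.ne_iff.1 hv
  exact ⟨Pi.single i (v i)⁻¹, by rw [dotProduct_single]; exact mul_inv_cancel₀ hi⟩

lemma exists_isUnit_det_mulVec_eq_vecMul_eq {p n : Fin 3 → K} (hp : p ≠ 0) (hn : n ≠ 0)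
    (hpn : p ⬝ᵥ n = 0) :
    ∃ M : Matrix (Fin 3) (Fin 3) K,
      IsUnit M.det ∧ M *ᵥ Pi.single 0 1 = p ∧ n ᵥ* M = Pi.single 1 1 := by
  obtain ⟨w, hw⟩ := exists_dotProduct_eq_one hp
  obtain ⟨m, hm⟩ := exists_dotProduct_eq_one hn
  have hdet : (of ![p, m, n ⨯₃ w]).det = -1 := by
    have hcross : m ⨯₃ (n ⨯₃ w) = (w ⬝ᵥ m) • n - w := by
      rw [cross_cross_eq_smul_sub_smul', hm, one_smul, dotProduct_comm m w]
    calc (of ![p, m, n ⨯₃ w]).det = p ⬝ᵥ m ⨯₃ (n ⨯₃ w) := (triple_product_eq_det _ _ _).symm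
      _ = -1 := by rw [hcross, dotProduct_sub, dotProduct_smul, hpn, hw, smul_zero, zero_sub]
  refine ⟨(of ![p, m, n ⨯₃ w])ᵀ, ?_, ?_, ?_⟩
  · simp [det_transpose, hdet]
  · simp
  · rw [vecMul_transpose]
    ext i
    fin_cases i
    · exact hpn
    · exact (dotProduct_comm m n).trans hm
    · exact (dotProduct_comm _ n).trans (dot_self_cross n w)

end Frame

section TernaryCubic

variable {R : Type*} [CommRing R]

/-- The binary form `∑ₖ cₖ x₀ⁿ⁻ᵏ x₁ᵏ` of degree `n` with coefficients `c`. -/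
noncomputable def binaryForm {n : ℕ} (c : Fin (n + 1) → R) : MvPolynomial (Fin 2) R :=
  ∑ k, C (c k) * X 0 ^ (n - k : ℕ) * X 1 ^ (k : ℕ)

lemma isHomogeneous_binaryForm {n : ℕ} (c : Fin (n + 1) → R) :
    (binaryForm c).IsHomogeneous n := by
  refine IsHomogeneous.sum _ _ _ fun k _ => ?_
  have h := (isHomogeneous_C_mul_X_pow (c k) (0 : Fin 2) (n - k)).mul
    (isHomogeneous_X_pow (R := R) (1 : Fin 2) k)
  rwa [Nat.sub_add_cancel k.is_le] at h

lemma binaryForm_zero {n : ℕ} : binaryForm (0 : Fin (n + 1) → R) = 0 := by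
  simp only [binaryForm, Pi.zero_apply, C_0, zero_mul, Finset.sum_const_zero]

/-- The ternary cubic form with coefficients `a`, `l`, `q`, `g`, expanded in powers of `x₀`: `a` is
its value at the point `e₀ = (1, 0, 0)`, and `l` describes the tangent line there if `a = 0`. -/
noncomputable def ternaryCubic (a : R) (l : Fin 2 → R) (q : Fin 3 → R) (g : Fin 4 → R) :
    MvPolynomial (Fin 3) R :=
  C a * X 0 ^ 3 + X 0 ^ 2 * rename Fin.succ (binaryForm l) + X 0 * rename Fin.succ (binaryForm q) +
    rename Fin.succ (binaryForm g)

variable (a : R) (l : Fin 2 → R) (q : Fin 3 → R) (g : Fin 4 → R)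

lemma ternaryCubic_eq_sum_monomials :
    ternaryCubic a l q g =
      C a * X 0 * X 0 * X 0 +
      C (l 0) * X 0 * X 0 * X 1 + C (l 1) * X 0 * X 0 * X 2 +
      C (q 0) * X 0 * X 1 * X 1 + C (q 1) * X 0 * X 1 * X 2 + C (q 2) * X 0 * X 2 * X 2 +
      C (g 0) * X 1 * X 1 * X 1 + C (g 1) * X 1 * X 1 * X 2 + C (g 2) * X 1 * X 2 * X 2 +
      C (g 3) * X 2 * X 2 * X 2 := by
  simp only [ternaryCubic, binaryForm, Nat.reduceAdd, Fin.sum_univ_two, Fin.sum_univ_three,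
    Fin.sum_univ_four, map_add, map_mul, map_pow, rename_C, rename_X, Fin.succ_zero_eq_one,
    Fin.succ_one_eq_two, Fin.coe_ofNat_eq_mod, Nat.reduceMod, Nat.reduceSub]
  ring

lemma exists_eq_ternaryCubic {K : Type*} [Field K] [CharZero K] {f : MvPolynomial (Fin 3) K}
    (hf : f.IsHomogeneous 3) :
    ∃ a l q g, f = ternaryCubic a l q g := by
  obtain ⟨f₂, hf₂, rfl⟩ := exists_eq_sum_X_mul hf
  choose f₁ hf₁ hf₂ using fun i => exists_eq_sum_X_mul (hf₂ i)
  choose c hc using fun i j => exists_eq_sum_C_mul_X (hf₁ i j)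
  refine ⟨c 0 0 0, ![c 0 0 1 + c 0 1 0 + c 1 0 0, c 0 0 2 + c 0 2 0 + c 2 0 0],
    ![c 0 1 1 + c 1 0 1 + c 1 1 0,
      c 0 1 2 + c 0 2 1 + c 1 0 2 + c 1 2 0 + c 2 0 1 + c 2 1 0,
      c 0 2 2 + c 2 0 2 + c 2 2 0],
    ![c 1 1 1, c 1 1 2 + c 1 2 1 + c 2 1 1, c 1 2 2 + c 2 1 2 + c 2 2 1, c 2 2 2], ?_⟩
  simp only [ternaryCubic_eq_sum_monomials, hf₂, hc, Fin.sum_univ_three, Matrix.cons_val, C_add]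
  ring

lemma eval_single_ternaryCubic : eval (Pi.single 0 1) (ternaryCubic a l q g) = a := by
  simp [ternaryCubic_eq_sum_monomials]

lemma gradientAt_single_ternaryCubic :
    gradientAt (ternaryCubic a l q g) (Pi.single 0 1) = ![3 * a, l 0, l 1] := by
  ext i
  fin_cases i <;> simp [gradientAt, ternaryCubic_eq_sum_monomials, pderiv_X]
  ring

variable (t : R) (w : Fin 2 → R)

lemma eval_cons_ternaryCubic :
    eval (Fin.cons t w) (ternaryCubic a l q g) =
      a * t ^ 3 + t ^ 2 * eval w (binaryForm l) + t * eval w (binaryForm q) +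
        eval w (binaryForm g) := by
  have hcons : (Fin.cons t w : Fin 3 → R) ∘ Fin.succ = w := rfl
  simp only [ternaryCubic, map_add, map_mul, map_pow, eval_C, eval_X, eval_rename, hcons,
    Fin.cons_zero]

lemma pderiv_zero_rename_succ {n : ℕ} (f : MvPolynomial (Fin n) R) :
    pderiv 0 (rename Fin.succ f) = 0 := by
  classical
  refine pderiv_eq_zero_of_notMem_vars fun h => ?_
  obtain ⟨i, -, hi⟩ := Finset.mem_image.1 (vars_rename Fin.succ f h)
  exact Fin.succ_ne_zero i hi

lemma gradientAt_cons_ternaryCubic_zero :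
    gradientAt (ternaryCubic a l q g) (Fin.cons t w) 0 =
      3 * a * t ^ 2 + 2 * t * eval w (binaryForm l) + eval w (binaryForm q) := by
  have hcons : (Fin.cons t w : Fin 3 → R) ∘ Fin.succ = w := rfl
  simp only [gradientAt, ternaryCubic, map_add, map_mul, map_pow, Derivation.leibniz,
    Derivation.leibniz_pow, derivation_C, pderiv_X_self, pderiv_zero_rename_succ, smul_eq_mul,
    nsmul_eq_mul, map_natCast, map_zero, map_one, eval_C, eval_X, eval_rename, hcons,
    Fin.cons_zero]
  push_cast
  ring

end TernaryCubic

section NormalForm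

open Matrix

variable {K : Type*} [Field K] [CharZero K] {f : MvPolynomial (Fin 3) K}

lemma exists_ne_zero_eval_eq_zero_of_ternary [IsAlgClosed K] (hf : f.IsHomogeneous 3) :
    ∃ v ≠ 0, eval v f = 0 := by
  obtain ⟨a, l, q, g, rfl⟩ := exists_eq_ternaryCubic hf
  obtain ⟨w, hw, hgw⟩ := exists_ne_zero_eval_eq_zero (isHomogeneous_binaryForm g)
  refine ⟨Fin.cons 0 w, fun h => hw (congrArg Fin.tail h), ?_⟩
  rw [eval_cons_ternaryCubic, hgw]
  ring

lemma exists_linearSubst_eq_ternaryCubic (hf : f.IsHomogeneous 3)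
    {M : Matrix (Fin 3) (Fin 3) K} (hfM : eval (M *ᵥ Pi.single 0 1) f = 0) :
    ∃ l q g, linearSubst M f = ternaryCubic 0 l q g ∧
      l = Fin.tail (gradientAt f (M *ᵥ Pi.single 0 1) ᵥ* M) := by
  obtain ⟨a, l, q, g, h⟩ := exists_eq_ternaryCubic (isHomogeneous_linearSubst M hf)
  obtain rfl : a = 0 := by
    rw [← eval_single_ternaryCubic a l q g, ← h, eval_linearSubst, hfM]
  refine ⟨l, q, g, h, ?_⟩
  rw [← gradientAt_linearSubst, h, gradientAt_single_ternaryCubic]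
  ext i
  fin_cases i <;> rfl

end NormalForm

section SmoothPoint

lemma exists_sq_eq_sq_eq_mul_eq {K : Type*} [Field K] [IsAlgClosed K] {a b c : K}
    (h : a * b = c ^ 2) : ∃ s t : K, s ^ 2 = a ∧ t ^ 2 = b ∧ s * t = c := by
  obtain ⟨s, hs⟩ := IsAlgClosed.exists_pow_nat_eq a two_pos
  obtain ⟨t, ht⟩ := IsAlgClosed.exists_pow_nat_eq b two_pos
  have hst : (s * t) ^ 2 = c ^ 2 := by rw [mul_pow, hs, ht, h]
  rcases sq_eq_sq_iff_eq_or_eq_neg.1 hst with hst | hst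
  · exact ⟨s, t, hs, ht, hst⟩
  · exact ⟨s, -t, hs, by rw [neg_sq, ht], by rw [mul_neg, hst, neg_neg]⟩

variable {R : Type*} [CommRing R]

/-- The cubic forms with a smooth zero at `e₀ = (1, 0, 0)` and tangent line `x₁ = 0` there. -/
noncomputable abbrev tangentCubic (q : Fin 3 → R) (g : Fin 4 → R) : MvPolynomial (Fin 3) R :=
  ternaryCubic 0 ![1, 0] q g

variable (q : Fin 3 → R) (g : Fin 4 → R)

lemma hessianMatrix_tangentCubic :
    hessianMatrix (tangentCubic q g) =
      !![C 2 * X 1, C 2 * X 0 + C (2 * q 0) * X 1 + C (q 1) * X 2,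
          C (q 1) * X 1 + C (2 * q 2) * X 2;
        C 2 * X 0 + C (2 * q 0) * X 1 + C (q 1) * X 2,
          C (2 * q 0) * X 0 + C (6 * g 0) * X 1 + C (2 * g 1) * X 2,
          C (q 1) * X 0 + C (2 * g 1) * X 1 + C (2 * g 2) * X 2;
        C (q 1) * X 1 + C (2 * q 2) * X 2,
          C (q 1) * X 0 + C (2 * g 1) * X 1 + C (2 * g 2) * X 2,
          C (2 * q 2) * X 0 + C (2 * g 2) * X 1 + C (6 * g 3) * X 2] := by
  ext1 i j
  fin_cases i <;> fin_cases j <;>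
    simp [hessianMatrix, ternaryCubic_eq_sum_monomials, pderiv_X, map_ofNat C] <;> ring

lemma gradientAt_det_hessianMatrix_tangentCubic_zero :
    gradientAt (hessianMatrix (tangentCubic q g)).det (Pi.single 0 1) 0 = -24 * q 2 := by
  rw [hessianMatrix_tangentCubic, Matrix.det_fin_three]
  simp only [gradientAt, Matrix.of_apply, Matrix.cons_val, map_add, map_sub, map_mul, map_one,
    map_zero, Derivation.leibniz, derivation_C, pderiv_X, Pi.single_apply, Fin.reduceEq,
    ↓reduceIte, smul_eq_mul, eval_C, eval_X]
  ring

lemma gradientAt_det_hessianMatrix_tangentCubic_two :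
    gradientAt (hessianMatrix (tangentCubic q g)).det (Pi.single 0 1) 2 = -24 * g 3 := by
  rw [hessianMatrix_tangentCubic, Matrix.det_fin_three]
  simp only [gradientAt, Matrix.of_apply, Matrix.cons_val, map_add, map_sub, map_mul, map_one,
    map_zero, Derivation.leibniz, derivation_C, pderiv_X, Pi.single_apply, Fin.reduceEq,
    ↓reduceIte, smul_eq_mul, eval_C, eval_X]
  ring

lemma isProdLinearForms_tangentCubic (a b c d : R) :
    IsProdLinearForms 3
      (tangentCubic ![a + b, c + d, 0] ![a * b, a * d + b * c, c * d, 0]) := by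
  have hlin (a b : R) : (X 0 + C a * X 1 + C b * X 2 : MvPolynomial (Fin 3) R).IsHomogeneous 1 :=
    ((isHomogeneous_X R 0).add (isHomogeneous_C_mul_X a 1)).add (isHomogeneous_C_mul_X b 2)
  have hprod : tangentCubic ![a + b, c + d, 0] ![a * b, a * d + b * c, c * d, 0] =
      X 1 * (X 0 + C a * X 1 + C c * X 2) * (X 0 + C b * X 1 + C d * X 2) := by
    rw [tangentCubic, ternaryCubic_eq_sum_monomials]
    simp only [Matrix.cons_val, C_mul, C_add, C_0, C_1]
    ring
  rw [hprod]
  exact ((IsProdLinearForms.of_isHomogeneous_one (isHomogeneous_X R 1)).mul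
    (.of_isHomogeneous_one (hlin a c))).mul (.of_isHomogeneous_one (hlin b d))

variable {K : Type*} [Field K] [CharZero K] {q : Fin 3 → K} {g : Fin 4 → K}

lemma tangent_line_component_of_parallelGradients
    (h : ParallelGradients (hessianMatrix (tangentCubic q g)).det (tangentCubic q g)) :
    q 2 = 0 ∧ g 3 = 0 := by
  have hgrad : gradientAt (tangentCubic q g) (Pi.single 0 1) = ![0, 1, 0] := by
    rw [gradientAt_single_ternaryCubic, mul_zero]
    rfl
  have hgrad₁ : gradientAt (tangentCubic q g) (Pi.single 0 1) 1 ≠ 0 := by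
    rw [hgrad]
    exact one_ne_zero
  have h₀ := h.gradientAt_eq_zero (congrFun hgrad 0) hgrad₁
  have h₂ := h.gradientAt_eq_zero (congrFun hgrad 2) hgrad₁
  rw [gradientAt_det_hessianMatrix_tangentCubic_zero] at h₀
  rw [gradientAt_det_hessianMatrix_tangentCubic_two] at h₂
  simpa using And.intro h₀ h₂

-- The residual conic is `x₀² + x₀ (q₀ x₁ + q₁ x₂) + (g₀ x₁² + g₁ x₁ x₂ + g₂ x₂²)`; completing the
-- square in `x₀` moves the test point to `(1, 1, 0)`.
lemma residual_conic_degenerate_of_parallelGradients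
    (h : ParallelGradients (hessianMatrix (tangentCubic q g)).det (tangentCubic q g)) :
    (q 0 ^ 2 - 4 * g 0) * (q 1 ^ 2 - 4 * g 2) = (q 0 * q 1 - 2 * g 1) ^ 2 := by
  obtain ⟨hq₂, hg₃⟩ := tangent_line_component_of_parallelGradients h
  have htest := congrArg (eval ![1 - q 0 / 2, 1, 0]) (h 0 1)
  rw [hessianMatrix_tangentCubic, Matrix.det_fin_three, tangentCubic,
    ternaryCubic_eq_sum_monomials, hq₂, hg₃] at htest
  simp only [Matrix.of_apply, Matrix.cons_val, map_add, map_sub, map_mul, map_one, map_zero,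
    Derivation.leibniz, Derivation.map_one_eq_zero, derivation_C, pderiv_X, Pi.single_apply,
    Fin.reduceEq, ↓reduceIte, smul_eq_mul, eval_C, eval_X] at htest
  linear_combination (-1 / 12) * htest

lemma exists_conic_factors_of_degenerate [IsAlgClosed K] {q₀ q₁ g₀ g₁ g₂ : K}
    (h : (q₀ ^ 2 - 4 * g₀) * (q₁ ^ 2 - 4 * g₂) = (q₀ * q₁ - 2 * g₁) ^ 2) :
    ∃ a b c d : K, q₀ = a + b ∧ q₁ = c + d ∧ g₀ = a * b ∧ g₁ = a * d + b * c ∧ g₂ = c * d := by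
  obtain ⟨s, t, hs, ht, hst⟩ := exists_sq_eq_sq_eq_mul_eq h
  exact ⟨(q₀ + s) / 2, (q₀ - s) / 2, (q₁ + t) / 2, (q₁ - t) / 2, by ring, by ring,
    by linear_combination hs / 4, by linear_combination hst / 2, by linear_combination ht / 4⟩

lemma isProdLinearForms_tangentCubic_of_parallelGradients [IsAlgClosed K]
    (h : ParallelGradients (hessianMatrix (tangentCubic q g)).det (tangentCubic q g)) :
    IsProdLinearForms 3 (tangentCubic q g) := by
  obtain ⟨hq₂, hg₃⟩ := tangent_line_component_of_parallelGradients h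
  obtain ⟨a, b, c, d, hq₀, hq₁, hg₀, hg₁, hg₂⟩ :=
    exists_conic_factors_of_degenerate (residual_conic_degenerate_of_parallelGradients h)
  have hq : q = ![a + b, c + d, 0] := by
    ext i
    fin_cases i
    exacts [hq₀, hq₁, hq₂]
  have hg : g = ![a * b, a * d + b * c, c * d, 0] := by
    ext i
    fin_cases i
    exacts [hg₀, hg₁, hg₂, hg₃]
  rw [hq, hg]
  exact isProdLinearForms_tangentCubic a b c d

theorem isProdLinearForms_of_gradientAt_ne_zero [IsAlgClosed K] {f : MvPolynomial (Fin 3) K}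
    (hf : f.IsHomogeneous 3) {p : Fin 3 → K} (hfp : eval p f = 0) (hgrad : gradientAt f p ≠ 0)
    (h : ParallelGradients (hessianMatrix f).det f) : IsProdLinearForms 3 f := by
  have hp : p ≠ 0 := by
    rintro rfl
    exact hgrad (gradientAt_zero (n := 1) hf)
  have hpgrad : p ⬝ᵥ gradientAt f p = 0 := by rw [dotProduct_gradientAt hf, hfp, mul_zero]
  obtain ⟨M, hM, rfl, hMgrad⟩ := exists_isUnit_det_mulVec_eq_vecMul_eq hp hgrad hpgrad
  obtain ⟨l, q, g, hfM, hl⟩ := exists_linearSubst_eq_ternaryCubic hf hfp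
  obtain rfl : l = ![1, 0] := by
    rw [hl, hMgrad]
    ext i
    fin_cases i <;> rfl
  have hpar := h.det_hessianMatrix_linearSubst M
  refine .of_linearSubst hM ?_
  rw [hfM] at hpar ⊢
  exact isProdLinearForms_tangentCubic_of_parallelGradients hpar

end SmoothPoint

section SingularZeros

variable {K : Type*} [Field K] {q : Fin 3 → K} {g : Fin 4 → K}

-- Where `q ≠ 0`, the equation `x₀ q + g = 0` can be solved for `x₀`, giving a zero with `∂₀f = q`.
lemma binaryForm_eq_zero_of_zeros_singular [Infinite K]
    (h : ∀ v, eval v (ternaryCubic 0 0 q g) = 0 → gradientAt (ternaryCubic 0 0 q g) v = 0) :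
    binaryForm q = 0 := by
  refine MvPolynomial.funext fun w => ?_
  rw [map_zero]
  by_contra hqw
  set t := -eval w (binaryForm g) / eval w (binaryForm q) with ht
  have hzero : eval (Fin.cons t w) (ternaryCubic 0 0 q g) = 0 := by
    rw [eval_cons_ternaryCubic, binaryForm_zero, ht, div_mul_cancel₀ _ hqw, map_zero]
    ring
  have hgrad : gradientAt (ternaryCubic 0 0 q g) (Fin.cons t w) 0 = eval w (binaryForm q) := by
    rw [gradientAt_cons_ternaryCubic_zero, binaryForm_zero, map_zero]
    ring
  exact hqw (hgrad.symm.trans (congrFun (h _ hzero) 0))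

variable [IsAlgClosed K]

lemma isProdLinearForms_ternaryCubic_of_zeros_singular
    (h : ∀ v, eval v (ternaryCubic 0 0 q g) = 0 → gradientAt (ternaryCubic 0 0 q g) v = 0) :
    IsProdLinearForms 3 (ternaryCubic 0 0 q g) := by
  have : Infinite K := IsAlgClosed.instInfinite
  have hbinary : ternaryCubic 0 0 q g = rename Fin.succ (binaryForm g) := by
    simp only [ternaryCubic, binaryForm_zero, binaryForm_eq_zero_of_zeros_singular h, map_zero,
      mul_zero, zero_mul, zero_add]
  rw [hbinary]
  exact (isProdLinearForms_of_isHomogeneous (isHomogeneous_binaryForm g)).map_rename _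

theorem isProdLinearForms_of_zeros_singular [CharZero K] {f : MvPolynomial (Fin 3) K}
    (hf : f.IsHomogeneous 3) (hsing : ∀ v, eval v f = 0 → gradientAt f v = 0) :
    IsProdLinearForms 3 f := by
  obtain ⟨p, hp, hfp⟩ := exists_ne_zero_eval_eq_zero_of_ternary hf
  obtain ⟨n, hn, hnp⟩ := exists_ne_zero_dotProduct_eq_zero p
  obtain ⟨M, hM, rfl, -⟩ :=
    exists_isUnit_det_mulVec_eq_vecMul_eq hp hn ((dotProduct_comm p n).trans hnp)
  obtain ⟨l, q, g, hfM, hl⟩ := exists_linearSubst_eq_ternaryCubic hf hfp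
  obtain rfl : l = 0 := by
    rw [hl, hsing _ hfp, Matrix.zero_vecMul]
    rfl
  refine .of_linearSubst hM ?_
  rw [hfM]
  refine isProdLinearForms_ternaryCubic_of_zeros_singular fun v hv => ?_
  rw [← hfM, eval_linearSubst] at hv
  rw [← hfM, gradientAt_linearSubst, hsing _ hv, Matrix.zero_vecMul]

end SingularZeros

theorem stmt1_general {K : Type*} [Field K] [IsAlgClosed K] [CharZero K]
    {f : MvPolynomial (Fin 3) K} (hf : f.IsHomogeneous 3) :
    IsProdLinearForms 3 f ↔
      ∀ u : Fin 3 → K,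
        Matrix.det
          !![pderiv 0 (hessianMatrix f).det, pderiv 1 (hessianMatrix f).det,
               pderiv 2 (hessianMatrix f).det;
             pderiv 0 f, pderiv 1 f, pderiv 2 f;
             C (u 0), C (u 1), C (u 2)] = 0 := by
  rw [← parallelGradients_iff_det_eq_zero]
  refine ⟨IsProdLinearForms.parallelGradients_det_hessianMatrix, fun h => ?_⟩
  by_cases hsing : ∀ v, eval v f = 0 → gradientAt f v = 0
  · exact isProdLinearForms_of_zeros_singular hf hsing
  · push Not at hsing
    obtain ⟨p, hfp, hgrad⟩ := hsing
    exact isProdLinearForms_of_gradientAt_ne_zero hf hfp hgrad h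

theorem stmt1 (f : MvPolynomial (Fin 3) ℂ) (hf : f.IsHomogeneous 3) :
    CompletelyReducible f ↔
      ∀ u : Fin 3 → ℂ,
        Matrix.det
          !![pderiv 0 (hessianDet f), pderiv 1 (hessianDet f), pderiv 2 (hessianDet f);
             pderiv 0 f, pderiv 1 f, pderiv 2 f;
             C (u 0), C (u 1), C (u 2)] = 0 :=
  completelyReducible_iff_isProdLinearForms.trans (stmt1_general hf)
end

section
/- For a ternary cubic form f over ℂ, the following are equivalent: (1) the Hessian determinant det(∂ᵢ∂ⱼ f) is the zero polynomial; (2) either f = a₀·a³ + b₀·b³ for some a₀, b₀ ∈ ℂ and linear forms a, b, or f = a²·b for some linear forms a, b; (3) f = a·b·c for some linear forms a, b, c whose coefficient vectors are linearly dependent over ℂ. -/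
open MvPolynomial

/-!
The Hessian determinant of a cubic form `f` vanishes exactly when `f` is a cone, that is, when
`∂ᵥ f = 0` for some `v ≠ 0`. Such a `v` lies in the kernel of the Hessian matrix. Conversely, let
`T` be the polarization of `f`; the hypothesis says that every bilinear form `T x` is degenerate.
If some `T x` has rank two with kernel spanned by `v`, then differentiating `det T (x + s y)` in `s`
gives `T y v v = 0` for all `y`, so `f` is singular along `v`. Unless `T v = 0` already, pick `e`
with `T v e e ≠ 0`; the Gram determinants on triples containing `v` show that `T y k k = 0` for all
`y` and all `k` in the hyperplane `T v e k = 0`. If no `T x` has rank two, the same holds with `x`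
in place of `v`. Finally a vector `u` of this hyperplane with `T u e e = 0` satisfies `T u = 0`.

A ternary cubic cone is a binary cubic form in two linear forms, hence over an algebraically closed
field a product of three linear combinations of them. In turn `x y (p x + q y)` is a combination of
two cubes if `p q ≠ 0` and has a square factor otherwise, and a form built from only two linear
forms is killed by `∂ᵥ` for any common zero `v` of these.
-/

open Module Matrix

section Trilinear

variable {K V : Type*} [Field K] [AddCommGroup V] [Module K V]

theorem exists_ne_zero_and_eq_zero_and_eq_zero (hV : 2 < finrank K V) (φ ψ : Dual K V) :
    ∃ u ≠ 0, φ u = 0 ∧ ψ u = 0 := by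
  have : FiniteDimensional K V := .of_finrank_pos (by lia)
  have hker : LinearMap.ker (φ.prod ψ) ≠ ⊥ :=
    LinearMap.ker_ne_bot_of_finrank_lt (by simpa using hV)
  obtain ⟨u, hu, hu0⟩ := Submodule.exists_mem_ne_zero_of_ne_bot hker
  exact ⟨u, hu0, by simpa using hu⟩

theorem det_gram_eq_zero [FiniteDimensional K V] {ι : Type*} [Fintype ι] [DecidableEq ι]
    (hV : finrank K V = Fintype.card ι) {B : V →ₗ[K] V →ₗ[K] K} (hB : ∃ v ≠ 0, B v = 0)
    (p : ι → V) :
    (of fun i j => B (p i) (p j)).det = 0 := by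
  obtain ⟨c, hc, hBc⟩ : ∃ c : ι → K, c ≠ 0 ∧ B (∑ i, c i • p i) = 0 := by
    by_cases hp : LinearIndependent K p
    · obtain ⟨v, hv, hBv⟩ := hB
      let b := basisOfLinearIndependentOfCardEqFinrank' p hp hV.symm
      refine ⟨b.equivFun v, by simpa using hv, ?_⟩
      have hsum : ∑ i, b.equivFun v i • p i = v := by
        simpa [b] using b.sum_equivFun v
      rw [hsum, hBv]
    · obtain ⟨c, hc, i, hi⟩ := Fintype.not_linearIndependent_iff.mp hp
      exact ⟨c, Function.ne_iff.mpr ⟨i, hi⟩, by rw [hc, map_zero]⟩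
  refine exists_vecMul_eq_zero_iff.mp ⟨c, hc, funext fun j => ?_⟩
  simpa [vecMul, dotProduct] using LinearMap.congr_fun hBc (p j)

theorem apply_self_eq_zero_of_forall_minor_eq_zero {T : V →ₗ[K] V →ₗ[K] V →ₗ[K] K}
    (hminor : ∀ x a b, T x a a * T x b b - T x a b ^ 2 = 0) {x e : V} (he : T x e e ≠ 0)
    {k : V} (hk : T x e k = 0) (y : V) : T y k k = 0 := by
  have hx := hminor x e k
  have hy := hminor y e k
  have hxy := hminor (x + y) e k
  simp only [map_add, LinearMap.add_apply, hk] at hx hxy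
  have hxkk : T x k k = 0 := by simpa [he] using hx
  rw [hxkk] at hxy
  exact (mul_eq_zero.mp (by linear_combination hxy - hy)).resolve_left he

/-- A trilinear form invariant under all permutations of its arguments, as the polarization of a
cubic form is. Invariance is required under the two adjacent transpositions, which generate the
symmetric group. -/
structure IsSymmTrilinear {R M : Type*} [CommSemiring R] [AddCommMonoid M] [Module R M]
    (T : M →ₗ[R] M →ₗ[R] M →ₗ[R] R) : Prop where
  swap₁₂ : ∀ x y z, T x y z = T y x z
  swap₂₃ : ∀ x y z, T x y z = T x z y

namespace IsSymmTrilinear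

variable {T : V →ₗ[K] V →ₗ[K] V →ₗ[K] K}

theorem apply_eq_zero_of_forall_self [NeZero (2 : K)] (hT : IsSymmTrilinear T) {x : V}
    (hx : ∀ a, T x a a = 0) : T x = 0 := by
  ext a b
  have hab := hx (a + b)
  simp only [map_add, LinearMap.add_apply, hx, hT.swap₂₃ x b a] at hab
  exact (mul_eq_zero.mp (by linear_combination hab : 2 * T x a b = 0)).resolve_left two_ne_zero

theorem exists_apply_eq_zero_of_ker [NeZero (2 : K)] (hT : IsSymmTrilinear T)
    (hV : 2 < finrank K V) {φ : Dual K V} {e : V} (he : φ e ≠ 0)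
    (hφ : ∀ k, φ k = 0 → ∀ y, T y k k = 0) : ∃ u ≠ 0, T u = 0 := by
  obtain ⟨u, hu0, hφu, hTu⟩ :=
    exists_ne_zero_and_eq_zero_and_eq_zero hV φ ((T.flip e).flip e)
  simp only [LinearMap.flip_apply] at hTu
  refine ⟨u, hu0, hT.apply_eq_zero_of_forall_self fun a => ?_⟩
  obtain ⟨t, k, hk, rfl⟩ : ∃ t k, φ k = 0 ∧ a = t • e + k :=
    ⟨φ a / φ e, a - (φ a / φ e) • e, by simp [he], by abel⟩
  have hek : T u e k = 0 := by
    have huk := hφ (u + k) (by simp [hφu, hk]) e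
    simp only [map_add, LinearMap.add_apply, hφ u hφu, hφ k hk, hT.swap₂₃ e k u] at huk
    rw [hT.swap₁₂]
    exact (mul_eq_zero.mp (by linear_combination huk : 2 * T e u k = 0)).resolve_left two_ne_zero
  simp [hTu, hek, hT.swap₂₃ u k e, hφ k hk]

theorem gram_det_eq_zero (hT : IsSymmTrilinear T) (hV : finrank K V = 3)
    (hdeg : ∀ x, ∃ v ≠ 0, T x v = 0) (x a b c : V) :
    T x a a * T x b b * T x c c + 2 * T x a b * T x b c * T x a c
      - T x a a * T x b c ^ 2 - T x b b * T x a c ^ 2 - T x c c * T x a b ^ 2 = 0 := by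
  have : FiniteDimensional K V := .of_finrank_pos (by lia)
  have hdet := det_gram_eq_zero (hV.trans (Fintype.card_fin 3).symm) (hdeg x) ![a, b, c]
  simp only [det_fin_three, of_apply, cons_val_zero, cons_val_one, cons_val,
    hT.swap₂₃ x b a, hT.swap₂₃ x c a, hT.swap₂₃ x c b] at hdet
  linear_combination hdet

theorem apply_self_eq_zero_of_minor_ne_zero [NeZero (2 : K)] (hT : IsSymmTrilinear T)
    (hV : finrank K V = 3) (hdeg : ∀ x, ∃ v ≠ 0, T x v = 0) {x v a b : V} (hv : T x v = 0)
    (hab : T x a a * T x b b - T x a b ^ 2 ≠ 0) (y : V) : T y v v = 0 := by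
  have hxv : ∀ z, T x z v = 0 := fun z => by rw [hT.swap₂₃, hv, LinearMap.zero_apply]
  -- The coefficient of `s` in the Gram determinant of `T (x + s • y)` on `a, b, v` is the minor
  -- times `T y v v`; the three values below isolate it.
  have hy := hT.gram_det_eq_zero hV hdeg y a b v
  have hadd := hT.gram_det_eq_zero hV hdeg (x + y) a b v
  have hsub := hT.gram_det_eq_zero hV hdeg (x - y) a b v
  simp only [map_add, map_sub, LinearMap.add_apply, LinearMap.sub_apply, hxv] at hadd hsub
  have hlin : 2 * ((T x a a * T x b b - T x a b ^ 2) * T y v v) = 0 := by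
    linear_combination hadd - hsub - 2 * hy
  simpa [two_ne_zero, hab] using hlin

theorem minor_eq_zero_of_singular (hT : IsSymmTrilinear T)
    (hV : finrank K V = 3) (hdeg : ∀ x, ∃ v ≠ 0, T x v = 0) {v e : V}
    (hv : ∀ y, T y v v = 0) (he : T v e e ≠ 0) (b : V) :
    T v e e * T v b b - T v e b ^ 2 = 0 := by
  have hvv : ∀ y, T v y v = 0 := fun y => by rw [hT.swap₁₂, hv]
  -- The Gram determinants of `T e` and `T (e + v)` on `e, b, v` differ by `T v e e` times the
  -- minor.
  have hgram := hT.gram_det_eq_zero hV hdeg e e b v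
  have hgramv := hT.gram_det_eq_zero hV hdeg (e + v) e b v
  simp only [map_add, LinearMap.add_apply, hv, hvv] at hgram hgramv
  simp only [hT.swap₂₃ e e v, hT.swap₂₃ e b v, hT.swap₁₂ e v] at hgram hgramv
  refine (mul_eq_zero.mp ?_).resolve_left he
  linear_combination hgram - hgramv

theorem apply_self_eq_zero_of_singular [NeZero (2 : K)] (hT : IsSymmTrilinear T)
    (hV : finrank K V = 3) (hdeg : ∀ x, ∃ v ≠ 0, T x v = 0) {v e : V}
    (hv : ∀ y, T y v v = 0) (he : T v e e ≠ 0) {k : V} (hk : T v e k = 0) (y : V) :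
    T y k k = 0 := by
  have hminor := hT.minor_eq_zero_of_singular hV hdeg hv he
  have hvk : ∀ z, T z k v = 0 := fun z => by
    have hz := hminor z
    have hzk := hminor (z + k)
    have hkk := hminor k
    simp only [map_add, LinearMap.add_apply, hk, hT.swap₂₃ v k z] at hzk hkk
    have hlin : 2 * (T v e e * T v z k) = 0 := by linear_combination hzk - hz - hkk
    rw [hT.swap₂₃, hT.swap₁₂]
    simpa [two_ne_zero, he] using hlin
  have off_ker : ∀ z, T v e z ≠ 0 → T z k k = 0 := fun z hz => by
    have hgram := hT.gram_det_eq_zero hV hdeg z e k v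
    have hzev : T z e v = T v e z := by rw [hT.swap₂₃, hT.swap₁₂, hT.swap₂₃]
    simp only [hv, hvk, hzev] at hgram
    have hprod : T z k k * T v e z ^ 2 = 0 := by linear_combination -hgram
    exact (mul_eq_zero.mp hprod).resolve_right (pow_ne_zero 2 hz)
  by_cases hy : T v e y = 0
  · have hye := off_ker (y + e) (by simpa [hy] using he)
    simpa [off_ker e he] using hye
  · exact off_ker y hy

theorem exists_apply_eq_zero [NeZero (2 : K)] (hT : IsSymmTrilinear T)
    (hV : finrank K V = 3) (hdeg : ∀ x, ∃ v ≠ 0, T x v = 0) : ∃ u ≠ 0, T u = 0 := by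
  have hV' : 2 < finrank K V := by lia
  by_cases hminor : ∀ x a b, T x a a * T x b b - T x a b ^ 2 = 0
  · by_cases hself : ∃ x e, T x e e ≠ 0
    · obtain ⟨x, e, he⟩ := hself
      exact hT.exists_apply_eq_zero_of_ker hV' (φ := T x e) he fun _ hk =>
        apply_self_eq_zero_of_forall_minor_eq_zero hminor he hk
    · push Not at hself
      obtain ⟨v, hv, -⟩ := hdeg 0
      exact ⟨v, hv, hT.apply_eq_zero_of_forall_self (hself v)⟩
  · push Not at hminor
    obtain ⟨x, a, b, hab⟩ := hminor
    obtain ⟨v, hv, hxv⟩ := hdeg x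
    have hvv := hT.apply_self_eq_zero_of_minor_ne_zero hV hdeg hxv hab
    by_cases hself : ∃ e, T v e e ≠ 0
    · obtain ⟨e, he⟩ := hself
      exact hT.exists_apply_eq_zero_of_ker hV' (φ := T v e) he fun _ hk =>
        hT.apply_self_eq_zero_of_singular hV hdeg hvv he hk
    · push Not at hself
      exact ⟨v, hv, hT.apply_eq_zero_of_forall_self hself⟩

end IsSymmTrilinear

end Trilinear

section DirectionalDerivative

variable {σ R : Type*} [Fintype σ] [CommRing R]

/-- The directional derivative `∑ i, v i • ∂ᵢ` of polynomials, linear in the direction `v`. -/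
noncomputable def dirDeriv :
    (σ → R) →ₗ[R] Derivation R (MvPolynomial σ R) (MvPolynomial σ R) :=
  Fintype.linearCombination R pderiv

theorem dirDeriv_apply (v : σ → R) (f : MvPolynomial σ R) :
    dirDeriv v f = ∑ i, v i • pderiv i f := by
  rw [dirDeriv, Fintype.linearCombination_apply, ← Derivation.coeFnAddMonoidHom_apply, map_sum,
    Finset.sum_apply]
  rfl

theorem dirDeriv_X (v : σ → R) (i : σ) : dirDeriv v (X i) = C (v i) := by
  classical
  simp [dirDeriv_apply, pderiv_X, Pi.single_apply, smul_eq_C_mul]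

theorem dirDeriv_comm (v w : σ → R) (f : MvPolynomial σ R) :
    dirDeriv v (dirDeriv w f) = dirDeriv w (dirDeriv v f) := by
  have hlie : ⁅dirDeriv v, dirDeriv w⁆ = 0 := derivation_ext fun i => by
    simp [Derivation.commutator_apply, dirDeriv_X]
  simpa [Derivation.commutator_apply, sub_eq_zero] using DFunLike.congr_fun hlie f

theorem isHomogeneous_dirDeriv {n : ℕ} {f : MvPolynomial σ R} (hf : f.IsHomogeneous n)
    (v : σ → R) : (dirDeriv v f).IsHomogeneous (n - 1) := by
  simp only [dirDeriv_apply, smul_eq_C_mul]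
  exact IsHomogeneous.sum _ _ _ fun i _ => hf.pderiv.C_mul (v i)

theorem eval_dirDeriv_self {n : ℕ} {f : MvPolynomial σ R} (hf : f.IsHomogeneous n)
    (x : σ → R) : eval x (dirDeriv x f) = n * eval x f := by
  simpa [dirDeriv_apply, smul_eval] using congrArg (eval x) hf.sum_X_mul_pderiv

theorem dirDeriv_eq_C_eval {a : MvPolynomial σ R} (ha : a.IsHomogeneous 1) (v : σ → R) :
    dirDeriv v a = C (eval v a) := by
  have hC := totalDegree_eq_zero_iff_eq_C.mp
    ((totalDegree_zero_iff_isHomogeneous (p := dirDeriv v a)).mpr (isHomogeneous_dirDeriv ha v))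
  have heuler := eval_dirDeriv_self ha v
  rw [hC, eval_C, Nat.cast_one, one_mul] at heuler
  rw [hC, heuler]

/-- The Hessian matrix `(∂ᵢ∂ⱼ f)` of a polynomial. -/
noncomputable def hessian (f : MvPolynomial σ R) : Matrix σ σ (MvPolynomial σ R) :=
  of fun i j => pderiv i (pderiv j f)

theorem hessian_mulVec (f : MvPolynomial σ R) (v : σ → R) :
    hessian f *ᵥ (C ∘ v) = fun i => pderiv i (dirDeriv v f) := by
  ext1 i
  simp [hessian, mulVec, dotProduct, dirDeriv_apply, smul_eq_C_mul, mul_comm]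

theorem map_eval_hessian_mulVec (f : MvPolynomial σ R) (x v : σ → R) :
    (hessian f).map (eval x) *ᵥ v = fun i => eval x (pderiv i (dirDeriv v f)) := by
  ext1 i
  rw [← congrFun (hessian_mulVec f v) i, RingHom.map_mulVec]
  simp [Function.comp_def]

theorem det_hessian_eq_zero_of_dirDeriv_eq_zero [IsDomain R] [DecidableEq σ]
    {f : MvPolynomial σ R} (hf : ∃ v ≠ 0, dirDeriv v f = 0) : (hessian f).det = 0 := by
  obtain ⟨v, hv, hvf⟩ := hf
  obtain ⟨i, hi⟩ := Function.ne_iff.mp hv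
  refine exists_mulVec_eq_zero_iff.mp ⟨C ∘ v, Function.ne_iff.mpr ⟨i, by simpa using hi⟩, ?_⟩
  ext1 i
  simp [hessian_mulVec, hvf]

end DirectionalDerivative

section ThirdDerivative

variable {σ R : Type*} [Fintype σ] [CommRing R]

/-- The third derivative of `f` at the origin as a trilinear form; for a cubic form `f` this is six
times its polarization. -/
noncomputable def thirdDeriv (f : MvPolynomial σ R) :
    (σ → R) →ₗ[R] (σ → R) →ₗ[R] (σ → R) →ₗ[R] R :=
  LinearMap.mk₂ R
    (fun x y =>
      { toFun z := constantCoeff (dirDeriv x (dirDeriv y (dirDeriv z f)))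
        map_add' := by simp
        map_smul' := by simp })
    (by intros; ext; simp) (by intros; ext; simp) (by intros; ext; simp) (by intros; ext; simp)

theorem thirdDeriv_apply (f : MvPolynomial σ R) (x y z : σ → R) :
    thirdDeriv f x y z = constantCoeff (dirDeriv x (dirDeriv y (dirDeriv z f))) := rfl

theorem isSymmTrilinear_thirdDeriv (f : MvPolynomial σ R) : IsSymmTrilinear (thirdDeriv f) where
  swap₁₂ x y z := by rw [thirdDeriv_apply, dirDeriv_comm, thirdDeriv_apply]
  swap₂₃ x y z := by rw [thirdDeriv_apply, dirDeriv_comm y z, thirdDeriv_apply]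

section

variable {f : MvPolynomial σ R}

theorem thirdDeriv_eq_eval (hf : f.IsHomogeneous 3) (x y z : σ → R) :
    thirdDeriv f x y z = eval x (dirDeriv y (dirDeriv z f)) := by
  rw [thirdDeriv_apply, dirDeriv_eq_C_eval, constantCoeff_C]
  exact isHomogeneous_dirDeriv (isHomogeneous_dirDeriv hf z) y

theorem thirdDeriv_self_apply (hf : f.IsHomogeneous 3) (x z : σ → R) :
    thirdDeriv f x x z = 2 * eval x (dirDeriv z f) := by
  rw [thirdDeriv_eq_eval hf, eval_dirDeriv_self (isHomogeneous_dirDeriv hf z)]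
  norm_num

theorem thirdDeriv_self_self (hf : f.IsHomogeneous 3) (x : σ → R) :
    thirdDeriv f x x x = 6 * eval x f := by
  rw [thirdDeriv_self_apply hf, eval_dirDeriv_self hf]
  push_cast
  ring

end

variable {K : Type*} [Field K] {f : MvPolynomial σ K}

theorem exists_thirdDeriv_apply_eq_zero [DecidableEq σ] (hf : f.IsHomogeneous 3)
    (hdet : (hessian f).det = 0) (x : σ → K) : ∃ v ≠ 0, thirdDeriv f x v = 0 := by
  have hdetx : ((hessian f).map (eval x)).det = 0 := by
    rw [← RingHom.mapMatrix_apply, ← RingHom.map_det, hdet, map_zero]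
  obtain ⟨v, hv, hxv⟩ := exists_mulVec_eq_zero_iff.mpr hdetx
  rw [map_eval_hessian_mulVec] at hxv
  refine ⟨v, hv, LinearMap.ext fun w => ?_⟩
  rw [(isSymmTrilinear_thirdDeriv f).swap₂₃, thirdDeriv_eq_eval hf, dirDeriv_apply]
  simpa [smul_eval] using Finset.sum_eq_zero fun i _ => by simp [congrFun hxv i]

theorem dirDeriv_eq_zero_of_thirdDeriv_eq_zero [Infinite K] [NeZero (2 : K)]
    (hf : f.IsHomogeneous 3) {v : σ → K} (hv : thirdDeriv f v = 0) : dirDeriv v f = 0 := by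
  refine MvPolynomial.funext fun x => ?_
  have hT := isSymmTrilinear_thirdDeriv f
  have hxx : 2 * eval x (dirDeriv v f) = 0 := by
    rw [← thirdDeriv_self_apply hf, hT.swap₂₃, hT.swap₁₂, hv, LinearMap.zero_apply,
      LinearMap.zero_apply]
  simpa [two_ne_zero] using hxx

theorem exists_dirDeriv_eq_zero_of_det_hessian_eq_zero [DecidableEq σ] [Infinite K]
    [NeZero (2 : K)] (hσ : Fintype.card σ = 3) (hf : f.IsHomogeneous 3)
    (hdet : (hessian f).det = 0) : ∃ v ≠ 0, dirDeriv v f = 0 := by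
  obtain ⟨v, hv, hTv⟩ := (isSymmTrilinear_thirdDeriv f).exists_apply_eq_zero (by simpa using hσ)
    (exists_thirdDeriv_apply_eq_zero hf hdet)
  exact ⟨v, hv, dirDeriv_eq_zero_of_thirdDeriv_eq_zero hf hTv⟩

theorem eval_add_smul_of_dirDeriv_eq_zero [NeZero (2 : K)] [NeZero (3 : K)]
    (hf : f.IsHomogeneous 3) {v : σ → K}
    (hv : dirDeriv v f = 0) (x : σ → K) (t : K) : eval (x + t • v) f = eval x f := by
  have hT := isSymmTrilinear_thirdDeriv f
  have hT₃ : ∀ y z, thirdDeriv f y z v = 0 := fun y z => by simp [thirdDeriv_apply, hv]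
  have hT₂ : ∀ y z, thirdDeriv f y v z = 0 := fun y z => by rw [hT.swap₂₃, hT₃]
  have hT₁ : ∀ y z, thirdDeriv f v y z = 0 := fun y z => by rw [hT.swap₁₂, hT₂]
  have h6 : (6 : K) ≠ 0 := by
    rw [show (6 : K) = 2 * 3 by norm_num]
    exact mul_ne_zero two_ne_zero three_ne_zero
  refine mul_left_cancel₀ h6 ?_
  rw [← thirdDeriv_self_self hf, ← thirdDeriv_self_self hf]
  simp [hT₁, hT₂, hT₃]

end ThirdDerivative

section LinearForms

theorem exists_linearMap_sub_mem_span {K V : Type*} [Field K] [AddCommGroup V] [Module K V]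
    {n : ℕ} (hV : finrank K V = n + 1) {v : V} (hv : v ≠ 0) :
    ∃ (π : V →ₗ[K] Fin n → K) (s : (Fin n → K) →ₗ[K] V), ∀ x, x - s (π x) ∈ K ∙ v := by
  have : FiniteDimensional K V := .of_finrank_pos (by lia)
  have hquot : finrank K (V ⧸ K ∙ v) = n := by
    have := (K ∙ v).finrank_quotient_add_finrank
    rw [finrank_span_singleton hv] at this
    lia
  let b := finBasisOfFinrankEq K (V ⧸ K ∙ v) hquot
  obtain ⟨r, hr⟩ := (K ∙ v).mkQ.exists_rightInverse_of_surjective (K ∙ v).range_mkQ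
  refine ⟨b.equivFun.toLinearMap ∘ₗ (K ∙ v).mkQ, r ∘ₗ b.equivFun.symm.toLinearMap, fun x => ?_⟩
  rw [← Submodule.Quotient.mk_eq_zero, Submodule.Quotient.mk_sub, sub_eq_zero]
  simpa using (LinearMap.congr_fun hr (Submodule.Quotient.mk x)).symm

variable {K : Type*} [Field K]

theorem exists_homogenize_eq_C_mul_prod [IsAlgClosed K] :
    ∀ (n : ℕ) {p : Polynomial K}, p.natDegree ≤ n → ∃ (c : K) (l : Fin n → MvPolynomial (Fin 2) K),
      (∀ i, (l i).IsHomogeneous 1) ∧ p.homogenize n = C c * ∏ i, l i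
  | 0, p, hp => by
    rw [Polynomial.eq_C_of_natDegree_le_zero hp]
    exact ⟨p.coeff 0, Fin.elim0, by simp, by simp⟩
  | n + 1, p, hp => by
    by_cases hdeg : p.natDegree = 0
    · rw [Polynomial.eq_C_of_natDegree_eq_zero hdeg]
      exact ⟨p.coeff 0, fun _ => X 1, fun _ => isHomogeneous_X K 1, by simp⟩
    obtain ⟨r, hr⟩ := IsAlgClosed.exists_root p (Polynomial.degree_ne_of_natDegree_ne hdeg)
    obtain ⟨q, rfl⟩ := Polynomial.dvd_iff_isRoot.mpr hr
    have hq : q.natDegree ≤ n := by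
      have hq0 : q ≠ 0 := by rintro rfl; simp at hdeg
      rw [Polynomial.natDegree_mul (Polynomial.X_sub_C_ne_zero r) hq0,
        Polynomial.natDegree_X_sub_C] at hp
      lia
    obtain ⟨c, l, hl, hql⟩ := exists_homogenize_eq_C_mul_prod n hq
    have hmul := Polynomial.homogenize_mul _ q (Polynomial.natDegree_X_sub_C_le r) hq
    refine ⟨c, Fin.cons ((Polynomial.X - Polynomial.C r).homogenize 1) l, ?_, ?_⟩
    · exact Fin.forall_fin_succ.mpr ⟨Polynomial.isHomogeneous_homogenize _, hl⟩
    · rw [Fin.prod_cons, mul_left_comm, ← hql, ← hmul, add_comm]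

theorem exists_eq_C_mul_prod_of_isHomogeneous [IsAlgClosed K] {n : ℕ}
    {g : MvPolynomial (Fin 2) K} (hg : g.IsHomogeneous n) :
    ∃ (c : K) (l : Fin n → MvPolynomial (Fin 2) K),
      (∀ i, (l i).IsHomogeneous 1) ∧ g = C c * ∏ i, l i := by
  rw [← Polynomial.homogenize_eq_of_isHomogeneous (p := aeval ![Polynomial.X, 1] g) hg rfl]
  refine exists_homogenize_eq_C_mul_prod n ?_
  simpa using aeval_natDegree_le g hg.totalDegree_le ![Polynomial.X, 1] (n := 1)
    (by simp [Fin.forall_fin_succ])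

theorem eval_aeval_toMvPolynomial {σ τ : Type*} [Fintype σ] [DecidableEq σ]
    (φ : (σ → K) →ₗ[K] τ → K) (f : MvPolynomial τ K) (x : σ → K) :
    eval x (aeval (LinearMap.toMatrix' φ).toMvPolynomial f) = eval (φ x) f := by
  rw [← aeval_eq_eval, comp_aeval_apply]
  simp only [aeval_eq_eval, toMvPolynomial_eval_eq_apply, LinearMap.toMatrix'_mulVec]

theorem exists_eq_aeval_of_dirDeriv_eq_zero {σ : Type*} [Fintype σ] [Infinite K]
    [NeZero (2 : K)] [NeZero (3 : K)] {n : ℕ} (hσ : Fintype.card σ = n + 1)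
    {f : MvPolynomial σ K} (hf : f.IsHomogeneous 3) (hcone : ∃ v ≠ 0, dirDeriv v f = 0) :
    ∃ (p : Fin n → MvPolynomial σ K) (g : MvPolynomial (Fin n) K),
      (∀ i, (p i).IsHomogeneous 1) ∧ g.IsHomogeneous 3 ∧ f = aeval p g := by
  classical
  obtain ⟨v, hv, hvf⟩ := hcone
  obtain ⟨π, s, hs⟩ := exists_linearMap_sub_mem_span (K := K) (V := σ → K) (by simpa using hσ) hv
  refine ⟨(LinearMap.toMatrix' π).toMvPolynomial, aeval (LinearMap.toMatrix' s).toMvPolynomial f,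
    toMvPolynomial_isHomogeneous _, hf.aeval _ (toMvPolynomial_isHomogeneous _), ?_⟩
  refine MvPolynomial.funext fun x => ?_
  obtain ⟨t, ht⟩ := Submodule.mem_span_singleton.mp (hs x)
  rw [eval_aeval_toMvPolynomial, eval_aeval_toMvPolynomial,
    ← eval_add_smul_of_dirDeriv_eq_zero hf hvf (s (π x)) t, ht, add_sub_cancel]

theorem not_linearIndependent_of_mem_span_range {V : Type*} [AddCommGroup V] [Module K V]
    {m n : ℕ} (hmn : n < m) {u : Fin m → V} {p : Fin n → V}
    (hu : ∀ i, u i ∈ Submodule.span K (Set.range p)) : ¬ LinearIndependent K u := fun h => by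
  classical
  have hle := (linearIndependent_le_span_aux' u h (Set.range p) (Set.range_subset_iff.mpr hu)).trans
    (Fintype.card_range_le p)
  rw [Fintype.card_fin, Fintype.card_fin] at hle
  lia

theorem aeval_mem_span_range {σ A : Type*} [CommRing A] [Algebra K A] (p : σ → A)
    {l : MvPolynomial σ K} (hl : l.IsHomogeneous 1) :
    aeval p l ∈ Submodule.span K (Set.range p) := by
  have hX : l ∈ Submodule.span K (Set.range X) := by
    rw [← homogeneousSubmodule_one_eq_span_X]
    exact hl
  have hmap := Submodule.mem_map_of_mem (f := (aeval p).toLinearMap) hX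
  rw [Submodule.map_span, ← Set.range_comp] at hmap
  simpa [Function.comp_def] using hmap

theorem exists_aeval_eq_mul_mul [IsAlgClosed K] {σ : Type*} {p : Fin 2 → MvPolynomial σ K}
    (hp : ∀ i, (p i).IsHomogeneous 1) {g : MvPolynomial (Fin 2) K} (hg : g.IsHomogeneous 3) :
    ∃ a b c : MvPolynomial σ K, a.IsHomogeneous 1 ∧ b.IsHomogeneous 1 ∧ c.IsHomogeneous 1 ∧
      ¬ LinearIndependent K ![a, b, c] ∧ aeval p g = a * b * c := by
  obtain ⟨k, l, hl, rfl⟩ := exists_eq_C_mul_prod_of_isHomogeneous hg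
  have hom : ∀ i, (aeval p (l i)).IsHomogeneous 1 := fun i => (hl i).aeval p hp
  have hspan : ∀ i, aeval p (l i) ∈ Submodule.span K (Set.range p) := fun i =>
    aeval_mem_span_range p (hl i)
  refine ⟨C k * aeval p (l 0), aeval p (l 1), aeval p (l 2), (hom 0).C_mul k, hom 1, hom 2,
    not_linearIndependent_of_mem_span_range (p := p) (by norm_num) ?_, ?_⟩
  · rw [← smul_eq_C_mul]
    simp only [Fin.forall_fin_succ]
    exact ⟨Submodule.smul_mem _ k (hspan 0), hspan 1, hspan 2, fun i => i.elim0⟩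
  · simp [Fin.prod_univ_three, mul_assoc]

theorem eq_smul_add_smul_of_add_eq_zero {V : Type*} [AddCommGroup V] [Module K V] {x y z : V}
    {r s t : K} (ht : t ≠ 0) (hsum : r • x + s • y + t • z = 0) :
    z = (-r / t) • x + (-s / t) • y := by
  rw [← inv_smul_smul₀ ht z, eq_neg_of_add_eq_zero_right hsum]
  module

theorem exists_mul_mul_eq_of_not_linearIndependent {A : Type*} [CommRing A] [Algebra K A]
    {a b c : A} (h : ¬ LinearIndependent K ![a, b, c]) :
    ∃ x ∈ ({a, b, c} : Set A), ∃ y ∈ ({a, b, c} : Set A), ∃ p q : K,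
      a * b * c = x * y * (p • x + q • y) := by
  obtain ⟨r, hr, i, hi⟩ := Fintype.not_linearIndependent_iff.mp h
  simp only [Fin.sum_univ_three, cons_val_zero, cons_val_one, cons_val] at hr
  fin_cases i
  · have ha : a = _ • b + _ • c :=
      eq_smul_add_smul_of_add_eq_zero hi ((add_rotate _ _ _).symm.trans hr)
    exact ⟨b, by simp, c, by simp, _, _, .trans (by ring) (congrArg (b * c * ·) ha)⟩
  · have hb : b = _ • a + _ • c :=
      eq_smul_add_smul_of_add_eq_zero hi ((add_right_comm _ _ _).trans hr)
    exact ⟨a, by simp, c, by simp, _, _, .trans (by ring) (congrArg (a * c * ·) hb)⟩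
  · exact ⟨a, by simp, b, by simp, _, _,
      congrArg (a * b * ·) (eq_smul_add_smul_of_add_eq_zero hi hr)⟩

-- `s - ω t` and `s - ω² t` are the factors of `s² + s t + t²`, up to a scalar the Hessian of
-- `s t (s + t)`.
theorem nine_mul_mul_mul_add_eq {R : Type*} [CommRing R] {ω : R} (hω : ω ^ 2 + ω + 1 = 0)
    (s t : R) :
    9 * (s * t * (s + t)) = (ω - ω ^ 2) * ((s - ω * t) ^ 3 - (s - ω ^ 2 * t) ^ 3) := by
  linear_combination (3 * s ^ 2 * t * (ω ^ 2 - 3 * ω + 3) +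
    3 * s * t ^ 2 * (-ω ^ 4 + 2 * ω ^ 3 - 3 * ω + 3) + t ^ 3 * (ω ^ 3 - ω ^ 2) ^ 2) * hω

theorem exists_sq_add_self_add_one_eq_zero [IsAlgClosed K] : ∃ ω : K, ω ^ 2 + ω + 1 = 0 := by
  have hdeg : (Polynomial.cyclotomic 3 K).degree ≠ 0 :=
    (Polynomial.degree_cyclotomic_pos 3 K (by norm_num)).ne'
  obtain ⟨ω, hω⟩ := IsAlgClosed.exists_root _ hdeg
  exact ⟨ω, by simpa [Polynomial.cyclotomic_three] using hω⟩

theorem exists_mul_mul_add_eq_sum_cubes [IsAlgClosed K] [NeZero (3 : K)] {σ : Type*}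
    {x y : MvPolynomial σ K} (hx : x.IsHomogeneous 1) (hy : y.IsHomogeneous 1) {p q : K}
    (hp : p ≠ 0) (hq : q ≠ 0) :
    ∃ a₀ b₀ : K, ∃ a b : MvPolynomial σ K, a.IsHomogeneous 1 ∧ b.IsHomogeneous 1 ∧
      x * y * (p • x + q • y) = C a₀ * a ^ 3 + C b₀ * b ^ 3 := by
  obtain ⟨ω, hω⟩ := exists_sq_add_self_add_one_eq_zero (K := K)
  have hωC : (C ω : MvPolynomial σ K) ^ 2 + C ω + 1 = 0 := by
    simpa only [map_add, map_pow, map_one, map_zero] using congrArg (C (σ := σ)) hω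
  have hcubes := nine_mul_mul_mul_add_eq hωC (C p * x) (C q * y)
  have h9 : (9 : K) ≠ 0 := by
    rw [show (9 : K) = 3 * 3 by norm_num]
    exact mul_ne_zero three_ne_zero three_ne_zero
  have hinv : C (9 * p * q)⁻¹ * (9 * C p * C q) = (1 : MvPolynomial σ K) := by
    rw [← map_ofNat C 9, ← map_mul, ← map_mul, ← map_mul,
      inv_mul_cancel₀ (mul_ne_zero (mul_ne_zero h9 hp) hq), map_one]
  have hom : ∀ r : K, (C p * x - C r * (C q * y)).IsHomogeneous 1 := fun r =>
    (hx.C_mul p).sub ((hy.C_mul q).C_mul r)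
  refine ⟨(9 * p * q)⁻¹ * (ω - ω ^ 2), -((9 * p * q)⁻¹ * (ω - ω ^ 2)), _, _, hom ω,
    hom (ω ^ 2), ?_⟩
  simp only [smul_eq_C_mul, map_mul C, map_neg, map_sub, map_pow]
  linear_combination C (9 * p * q)⁻¹ * hcubes - x * y * (C p * x + C q * y) * hinv

theorem mul_mul_add_eq_sum_cubes_or_sq_mul [IsAlgClosed K] [NeZero (3 : K)] {σ : Type*}
    {x y : MvPolynomial σ K} (hx : x.IsHomogeneous 1) (hy : y.IsHomogeneous 1) (p q : K) :
    (∃ a₀ b₀ : K, ∃ a b : MvPolynomial σ K, a.IsHomogeneous 1 ∧ b.IsHomogeneous 1 ∧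
        x * y * (p • x + q • y) = C a₀ * a ^ 3 + C b₀ * b ^ 3) ∨
      (∃ a b : MvPolynomial σ K, a.IsHomogeneous 1 ∧ b.IsHomogeneous 1 ∧
        x * y * (p • x + q • y) = a ^ 2 * b) := by
  obtain rfl | hp := eq_or_ne p 0
  · exact .inr ⟨y, q • x, hy, (homogeneousSubmodule σ K 1).smul_mem q hx, by
      simp only [smul_eq_C_mul, C_0]; ring⟩
  obtain rfl | hq := eq_or_ne q 0
  · exact .inr ⟨x, p • y, hx, (homogeneousSubmodule σ K 1).smul_mem p hy, by
      simp only [smul_eq_C_mul, C_0]; ring⟩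
  exact .inl (exists_mul_mul_add_eq_sum_cubes hx hy hp hq)

theorem exists_dirDeriv_eq_zero_and_dirDeriv_eq_zero {σ : Type*} [Fintype σ]
    (hσ : 2 < Fintype.card σ) {a b : MvPolynomial σ K} (ha : a.IsHomogeneous 1)
    (hb : b.IsHomogeneous 1) : ∃ v ≠ 0, dirDeriv v a = 0 ∧ dirDeriv v b = 0 := by
  let slope (l : MvPolynomial σ K) : Dual K (σ → K) :=
    { toFun v := constantCoeff (dirDeriv v l)
      map_add' := by simp
      map_smul' := by simp }
  have slope_eq_zero : ∀ {l : MvPolynomial σ K} {v}, l.IsHomogeneous 1 → slope l v = 0 →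
      dirDeriv v l = 0 := fun {l v} hl hlv => by
    have hlv : constantCoeff (dirDeriv v l) = 0 := hlv
    rw [dirDeriv_eq_C_eval hl, constantCoeff_C] at hlv
    rw [dirDeriv_eq_C_eval hl, hlv, C_0]
  obtain ⟨v, hv, hva, hvb⟩ :=
    exists_ne_zero_and_eq_zero_and_eq_zero (by simpa using hσ) (slope a) (slope b)
  exact ⟨v, hv, slope_eq_zero ha hva, slope_eq_zero hb hvb⟩

end LinearForms

theorem stmt3_general {K : Type*} [Field K] [IsAlgClosed K] [NeZero (2 : K)] [NeZero (3 : K)]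
    (f : MvPolynomial (Fin 3) K) (hf : f.IsHomogeneous 3) :
    [(hessian f).det = 0,
     (∃ a₀ b₀ : K, ∃ a b : MvPolynomial (Fin 3) K, a.IsHomogeneous 1 ∧ b.IsHomogeneous 1 ∧
         f = C a₀ * a ^ 3 + C b₀ * b ^ 3) ∨
       (∃ a b : MvPolynomial (Fin 3) K, a.IsHomogeneous 1 ∧ b.IsHomogeneous 1 ∧ f = a ^ 2 * b),
     ∃ a b c : MvPolynomial (Fin 3) K, a.IsHomogeneous 1 ∧ b.IsHomogeneous 1 ∧
       c.IsHomogeneous 1 ∧ ¬ LinearIndependent K ![a, b, c] ∧ f = a * b * c].TFAE := by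
  tfae_have 1 → 3 := fun hdet => by
    obtain ⟨p, g, hp, hg, rfl⟩ := exists_eq_aeval_of_dirDeriv_eq_zero (Fintype.card_fin 3) hf
      (exists_dirDeriv_eq_zero_of_det_hessian_eq_zero (Fintype.card_fin 3) hf hdet)
    exact exists_aeval_eq_mul_mul hp hg
  tfae_have 3 → 2 := by
    rintro ⟨a, b, c, ha, hb, hc, hdep, rfl⟩
    have hom : ∀ l ∈ ({a, b, c} : Set _), l.IsHomogeneous 1 := by simp [ha, hb, hc]
    obtain ⟨x, hx, y, hy, p, q, hxy⟩ := exists_mul_mul_eq_of_not_linearIndependent hdep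
    rw [hxy]
    exact mul_mul_add_eq_sum_cubes_or_sq_mul (hom x hx) (hom y hy) p q
  tfae_have 2 → 1 := by
    rintro (⟨a₀, b₀, a, b, ha, hb, rfl⟩ | ⟨a, b, ha, hb, rfl⟩) <;>
    · obtain ⟨v, hv, hva, hvb⟩ :=
        exists_dirDeriv_eq_zero_and_dirDeriv_eq_zero (by simp) ha hb
      exact det_hessian_eq_zero_of_dirDeriv_eq_zero
        ⟨v, hv, by simp [Derivation.leibniz_pow, hva, hvb]⟩
  tfae_finish

theorem stmt3 (f : MvPolynomial (Fin 3) ℂ) (hf : f.IsHomogeneous 3) :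
    [hessianDet f = 0,
     (∃ a₀ b₀ : ℂ, ∃ a b : MvPolynomial (Fin 3) ℂ, IsLinearForm a ∧ IsLinearForm b ∧
         f = C a₀ * a ^ 3 + C b₀ * b ^ 3) ∨
       (∃ a b : MvPolynomial (Fin 3) ℂ, IsLinearForm a ∧ IsLinearForm b ∧ f = a ^ 2 * b),
     ∃ a b c : MvPolynomial (Fin 3) ℂ, IsLinearForm a ∧ IsLinearForm b ∧ IsLinearForm c ∧
       ¬ LinearIndependent ℂ ![a, b, c] ∧ f = a * b * c].TFAE :=
  stmt3_general f hf
end
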